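/- For every integer m ≥ 2, the cyclic matching sequencibility of the complete graph K_{2m+1} equals m - 1. -/

import Mathlib

/-- Two edges of a graph (as unordered pairs of vertices) are *disjoint*
if they share no vertex. -/
def edgesDisjoint {V : Type*} (e₁ e₂ : Sym2 V) : Prop :=
  ∀ v : V, v ∈ e₁ → v ∉ e₂

/-- The number of edges of a graph `G`. -/
noncomputable def edgeCount {V : Type*} (G : SimpleGraph V) : ℕ :=
  Nat.card G.edgeSet

/-- A linear ordering `f` of the edges of `G` has matching number at least `d`
if every `d` consecutive edges in the ordering are pairwise disjoint. -/
def LinearGood {V : Type*} (G : SimpleGraph V)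
    (f : Fin (edgeCount G) ≃ G.edgeSet) (d : ℕ) : Prop :=
  ∀ j k : Fin (edgeCount G), j ≠ k → (j : ℕ) < (k : ℕ) + d → (k : ℕ) < (j : ℕ) + d →
    edgesDisjoint (f j : Sym2 V) (f k : Sym2 V)

/-- The matching sequencibility `ms G`: the largest `d` (necessarily at most the
number of edges) for which some linear ordering of the edges of `G` has every
`d` consecutive edges forming a matching. -/
noncomputable def ms {V : Type*} (G : SimpleGraph V) : ℕ :=
  sSup {d : ℕ | d ≤ edgeCount G ∧ ∃ f : Fin (edgeCount G) ≃ G.edgeSet, LinearGood G f d}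

/-- A cyclic ordering `f : ZMod N ≃ edges of G` has cyclic matching number at least `d`
if every `d` cyclically consecutive edges in the ordering are pairwise disjoint. -/
def CyclicGood {V : Type*} (G : SimpleGraph V) {N : ℕ}
    (f : ZMod N ≃ G.edgeSet) (d : ℕ) : Prop :=
  ∀ (i : ZMod N) (j k : ℕ), j < d → k < d → j ≠ k →
    edgesDisjoint (f (i + (j : ZMod N)) : Sym2 V) (f (i + (k : ZMod N)) : Sym2 V)

/-- The cyclic matching sequencibility `cms G`: the largest `d` for which some
cyclic ordering of the edges of `G` has every `d` cyclically consecutive edges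
forming a matching. -/
noncomputable def cms {V : Type*} (G : SimpleGraph V) : ℕ :=
  sSup {d : ℕ | ∃ f : ZMod (edgeCount G) ≃ G.edgeSet, CyclicGood G f d}

/-!
Upper bound: suppose `m` consecutive edges always form a matching of the `2 * m + 1` vertices.
The edges at positions `i` and `i + m` both avoid the `m - 1` edges between them, so they are two
distinct pairs inside a set of three vertices. Hence they meet, and the consecutive occurrences of
any vertex are at distance `m` (a short gap) or `m + 1` (a long gap). A vertex `a` cannot have two
short gaps in a row: if it has them around an edge `{a, x}`, then `x` has two long gaps there, so,
starting from that edge and going once around, the occurrences of `x` begin behind those of `a` and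
end ahead of them. The two sequences have the same length and their lag changes by at most one at a
time, so they coincide somewhere in between, which is a second appearance of `{a, x}`. So short and
long gaps alternate, and both ends of an edge recur together `2 * m + 1` positions later.

Lower bound: list the near-perfect matchings `{t + 1, t - 1}, …, {t + m, t - m}` of
`ZMod (2 * m + 1)` one after the other, for `t = 0, …, 2 * m`.
-/

section CyclicOrderings

variable {V : Type*} {G : SimpleGraph V} {N d : ℕ} {f : ZMod N ≃ G.edgeSet}

theorem edgesDisjoint.symm {e₁ e₂ : Sym2 V} (h : edgesDisjoint e₁ e₂) : edgesDisjoint e₂ e₁ :=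
  fun v h₂ h₁ => h v h₁ h₂

theorem two_mul_edgeCount_of_isRegularOfDegree [Fintype V] [DecidableRel G.Adj]
    (h : G.IsRegularOfDegree d) : 2 * edgeCount G = d * Fintype.card V := by
  rw [edgeCount, Nat.card_eq_fintype_card, ← SimpleGraph.edgeFinset_card,
    ← SimpleGraph.sum_degrees_eq_twice_card_edges, Finset.sum_congr rfl fun v _ => h v]
  simp [mul_comm]

theorem cyclicGood_iff_forall_add :
    CyclicGood G f d ↔ ∀ (i : ZMod N) (k : ℕ), 0 < k → k < d →
      edgesDisjoint (f i : Sym2 V) (f (i + k) : Sym2 V) := by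
  refine ⟨fun hf i k hk hkd => ?_, fun h i j k hj hk hjk => ?_⟩
  · simpa using hf i 0 k (hk.trans hkd) hkd hk.ne
  · have of_lt {j k : ℕ} (hjk : j < k) (hk : k < d) :
        edgesDisjoint (f (i + j) : Sym2 V) (f (i + k) : Sym2 V) := by
      have := h (i + j) (k - j) (by omega) (by omega)
      rwa [add_assoc, ← Nat.cast_add, Nat.add_sub_cancel' hjk.le] at this
    rcases hjk.lt_or_gt with hlt | hgt
    · exact of_lt hlt hk
    · exact (of_lt hgt hj).symm

theorem CyclicGood.mono {d' : ℕ} (hf : CyclicGood G f d) (h : d' ≤ d) : CyclicGood G f d' :=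
  fun i j k hj hk => hf i j k (hj.trans_le h) (hk.trans_le h)

theorem CyclicGood.le_length [NeZero N] (hf : CyclicGood G f d) : d ≤ N := by
  by_contra! hNd
  have hself := cyclicGood_iff_forall_add.1 hf 0 N (NeZero.pos N) hNd
  rw [ZMod.natCast_self, add_zero] at hself
  exact hself _ (Sym2.out_fst_mem _) (Sym2.out_fst_mem _)

theorem CyclicGood.le_cms {f : ZMod (edgeCount G) ≃ G.edgeSet} (hG : edgeCount G ≠ 0)
    (hf : CyclicGood G f d) : d ≤ cms G := by
  have : NeZero (edgeCount G) := ⟨hG⟩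
  exact le_csSup ⟨edgeCount G, fun _ ⟨_, hg⟩ => hg.le_length⟩ ⟨f, hf⟩

theorem le_cms_of_periodic {e : ℕ → Sym2 V} (hG : edgeCount G ≠ 0) (hmem : ∀ n, e n ∈ G.edgeSet)
    (hper : Function.Periodic e (edgeCount G)) (hinj : Set.InjOn e (Set.Iio (edgeCount G)))
    (hdisj : ∀ n k, 0 < k → k < d → edgesDisjoint (e n) (e (n + k))) : d ≤ cms G := by
  have : NeZero (edgeCount G) := ⟨hG⟩
  have : Finite G.edgeSet := Nat.finite_of_card_ne_zero hG
  let g (i : ZMod (edgeCount G)) : G.edgeSet := ⟨e i.val, hmem _⟩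
  have g_injective : Function.Injective g := fun i j hij =>
    ZMod.val_injective _ (hinj (ZMod.val_lt i) (ZMod.val_lt j) (congrArg Subtype.val hij))
  have g_bijective : Function.Bijective g :=
    g_injective.bijective_of_nat_card_le (Nat.card_zmod _).ge
  refine CyclicGood.le_cms (f := Equiv.ofBijective g g_bijective) hG
    (cyclicGood_iff_forall_add.2 fun i k hk hkd => ?_)
  have g_add : (g (i + k) : Sym2 V) = e (i.val + k) := by
    simp only [g, ZMod.val_add, ZMod.val_natCast, Nat.add_mod_mod, hper.map_mod_nat]
  simpa only [Equiv.ofBijective_apply, g_add] using hdisj i.val k hk hkd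

theorem exists_ne_mem_edge {e : G.edgeSet} {v : V} (hv : v ∈ (e : Sym2 V)) :
    ∃ w, w ≠ v ∧ w ∈ (e : Sym2 V) :=
  ⟨_, Sym2.other_ne (G.not_isDiag_of_mem_edgeSet e.2) hv, Sym2.other_mem hv⟩

theorem index_eq_of_mem_of_mem {i j : ZMod N} {a b : V} (hab : a ≠ b)
    (hai : a ∈ (f i : Sym2 V)) (hbi : b ∈ (f i : Sym2 V))
    (haj : a ∈ (f j : Sym2 V)) (hbj : b ∈ (f j : Sym2 V)) : i = j :=
  f.injective <| Subtype.ext <|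
    ((Sym2.mem_and_mem_iff hab).1 ⟨hai, hbi⟩).trans ((Sym2.mem_and_mem_iff hab).1 ⟨haj, hbj⟩).symm

end CyclicOrderings

section Gaps

variable {V : Type*} {G : SimpleGraph V} {N m : ℕ} {f : ZMod N ≃ G.edgeSet}

/-- The vertices on the edges strictly between positions `i` and `i + m` of a cyclic ordering. -/
def innerVertices [DecidableEq V] (f : ZMod N ≃ G.edgeSet) (i : ZMod N) (m : ℕ) : Finset V :=
  (Finset.Ioo 0 m).biUnion fun k => (f (i + k) : Sym2 V).toFinset

theorem three_le_card_union_toFinset [DecidableEq V] {e₁ e₂ : Sym2 V} (h₁ : ¬e₁.IsDiag)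
    (h₂ : ¬e₂.IsDiag) (hne : e₁ ≠ e₂) : 3 ≤ (e₁.toFinset ∪ e₂.toFinset).card := by
  by_contra! hlt
  have hcard₁ := Sym2.card_toFinset_of_not_isDiag e₁ h₁
  have hcard₂ := Sym2.card_toFinset_of_not_isDiag e₂ h₂
  have heq₁ : e₁.toFinset = e₁.toFinset ∪ e₂.toFinset :=
    Finset.eq_of_subset_of_card_le Finset.subset_union_left (by omega)
  have heq₂ : e₂.toFinset = e₁.toFinset ∪ e₂.toFinset :=
    Finset.eq_of_subset_of_card_le Finset.subset_union_right (by omega)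
  refine hne (Sym2.ext fun v => ?_)
  rw [← Sym2.mem_toFinset, heq₁, ← heq₂, Sym2.mem_toFinset]

theorem card_toFinset_edge [DecidableEq V] (e : G.edgeSet) : (e : Sym2 V).toFinset.card = 2 :=
  Sym2.card_toFinset_of_not_isDiag _ (G.not_isDiag_of_mem_edgeSet e.2)

namespace CyclicGood

theorem card_innerVertices [DecidableEq V] (hf : CyclicGood G f m) (i : ZMod N) :
    (innerVertices f i m).card = 2 * (m - 1) := by
  rw [innerVertices, Finset.card_biUnion]
  · simp [card_toFinset_edge, mul_comm]
  · intro j hj k hk hjk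
    simp only [Finset.coe_Ioo, Set.mem_Ioo] at hj hk
    refine Finset.disjoint_left.2 fun v hvj hvk => ?_
    rw [Sym2.mem_toFinset] at hvj hvk
    exact hf i j k hj.2 hk.2 hjk v hvj hvk

theorem disjoint_innerVertices [DecidableEq V] (hf : CyclicGood G f m) (i : ZMod N) :
    Disjoint ((f i : Sym2 V).toFinset ∪ (f (i + m) : Sym2 V).toFinset) (innerVertices f i m) := by
  refine Finset.disjoint_left.2 fun v hv hinner => ?_
  simp only [innerVertices, Finset.mem_biUnion, Finset.mem_Ioo, Sym2.mem_toFinset] at hinner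
  obtain ⟨k, ⟨hk, hkm⟩, hvk⟩ := hinner
  simp only [Finset.mem_union, Sym2.mem_toFinset] at hv
  rcases hv with hv | hv
  · exact cyclicGood_iff_forall_add.1 hf i k hk hkm v hv hvk
  · have hdisj := cyclicGood_iff_forall_add.1 hf (i + k) (m - k) (by omega) (by omega)
    rw [add_assoc, ← Nat.cast_add, Nat.add_sub_cancel' hkm.le] at hdisj
    exact hdisj v hvk hv

section NearPerfect

variable [Fintype V]

theorem card_union_toFinset_eq_three [DecidableEq V] (hf : CyclicGood G f m)
    (hV : Fintype.card V = 2 * m + 1) (hm : (m : ZMod N) ≠ 0) (i : ZMod N) :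
    ((f i : Sym2 V).toFinset ∪ (f (i + m) : Sym2 V).toFinset).card = 3 := by
  have hne : (f i : Sym2 V) ≠ f (i + m) := fun h =>
    hm (left_eq_add.1 (f.injective (Subtype.ext h)))
  have hlower := three_le_card_union_toFinset (G.not_isDiag_of_mem_edgeSet (f i).2)
    (G.not_isDiag_of_mem_edgeSet (f (i + m)).2) hne
  have hupper := (Finset.card_union_of_disjoint (hf.disjoint_innerVertices i)).symm.trans_le
    (Finset.card_le_univ _)
  rw [hf.card_innerVertices, hV] at hupper
  omega

theorem exists_mem_mem_add (hf : CyclicGood G f m) (hV : Fintype.card V = 2 * m + 1)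
    (hm : (m : ZMod N) ≠ 0) (i : ZMod N) :
    ∃ v, v ∈ (f i : Sym2 V) ∧ v ∈ (f (i + m) : Sym2 V) := by
  classical
  have hcard := Finset.card_union_add_card_inter (f i : Sym2 V).toFinset
    (f (i + m) : Sym2 V).toFinset
  rw [hf.card_union_toFinset_eq_three hV hm, card_toFinset_edge, card_toFinset_edge] at hcard
  obtain ⟨v, hv⟩ := Finset.card_pos.1 (by omega : 0 < ((f i : Sym2 V).toFinset ∩
    (f (i + m) : Sym2 V).toFinset).card)
  exact ⟨v, by simpa using hv⟩

theorem exists_le_mem_add (hf : CyclicGood G f m) (hV : Fintype.card V = 2 * m + 1)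
    (hm : (m : ZMod N) ≠ 0) (i : ZMod N) (v : V) :
    ∃ k ≤ m, v ∈ (f (i + (k : ℕ)) : Sym2 V) := by
  classical
  have hm0 : m ≠ 0 := by rintro rfl; simp at hm
  have huniv : ((f i : Sym2 V).toFinset ∪ (f (i + m) : Sym2 V).toFinset) ∪ innerVertices f i m =
      Finset.univ := by
    rw [← Finset.card_eq_iff_eq_univ, Finset.card_union_of_disjoint (hf.disjoint_innerVertices i),
      hf.card_union_toFinset_eq_three hV hm, hf.card_innerVertices, hV]
    omega
  have hv := huniv ▸ Finset.mem_univ v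
  simp only [innerVertices, Finset.mem_union, Finset.mem_biUnion, Finset.mem_Ioo,
    Sym2.mem_toFinset] at hv
  rcases hv with (hv | hv) | ⟨k, hk, hv⟩
  · exact ⟨0, zero_le, by simpa using hv⟩
  · exact ⟨m, le_rfl, hv⟩
  · exact ⟨k, hk.2.le, hv⟩

theorem mem_add_or_mem_add_succ (hf : CyclicGood G f m) (hV : Fintype.card V = 2 * m + 1)
    (hm : (m : ZMod N) ≠ 0) {i : ZMod N} {v : V} (hv : v ∈ (f i : Sym2 V)) :
    v ∈ (f (i + m) : Sym2 V) ∨ v ∈ (f (i + (m + 1 : ℕ)) : Sym2 V) := by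
  obtain ⟨k, hk, hvk⟩ := hf.exists_le_mem_add hV hm (i + 1) v
  rw [add_assoc, ← Nat.cast_one, ← Nat.cast_add, add_comm 1 k] at hvk
  have hmk : m ≤ k + 1 := by
    by_contra! hlt
    exact cyclicGood_iff_forall_add.1 hf i (k + 1) k.succ_pos hlt v hv hvk
  obtain hkm | hkm : k + 1 = m ∨ k + 1 = m + 1 := by omega
  · exact .inl (hkm ▸ hvk)
  · exact .inr (hkm ▸ hvk)

end NearPerfect

end CyclicGood

end Gaps

section Occurrences

variable {V : Type*} {G : SimpleGraph V} {N m d : ℕ} {f : ZMod N ≃ G.edgeSet}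
  {i : ZMod N} {v : V}

/-- The number of steps from position `i` of a cyclic ordering to the `k`-th edge containing `v`,
where an edge at position `i` itself counts as the `0`-th one and the ordering is run through
repeatedly. -/
noncomputable def occurrence (f : ZMod N ≃ G.edgeSet) (i : ZMod N) (v : V) (k : ℕ) : ℕ :=
  Nat.nth (fun t : ℕ => v ∈ (f (i + t) : Sym2 V)) k

theorem count_mem_eq_degree [Fintype V] [DecidableEq V] [DecidableRel G.Adj] [NeZero N]
    (f : ZMod N ≃ G.edgeSet) (i : ZMod N) (v : V) :
    Nat.count (fun t : ℕ => v ∈ (f (i + t) : Sym2 V)) N = G.degree v := by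
  rw [Nat.count_eq_card_filter_range, ← SimpleGraph.card_incidenceFinset_eq_degree]
  refine Finset.card_bij (fun t _ => (f (i + t) : Sym2 V)) (fun t ht => ?_)
    (fun s hs t ht hst => ?_) (fun e he => ?_)
  · rw [SimpleGraph.mem_incidenceFinset]
    exact ⟨(f (i + t)).2, (Finset.mem_filter.1 ht).2⟩
  · simp only [Finset.mem_filter, Finset.mem_range] at hs ht
    have hcast := add_left_cancel (f.injective (Subtype.ext hst))
    exact ((ZMod.natCast_eq_natCast_iff _ _ _).1 hcast).eq_of_lt_of_lt hs.1 ht.1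
  · rw [SimpleGraph.mem_incidenceFinset] at he
    refine ⟨(f.symm ⟨e, he.1⟩ - i).val, ?_, by simp⟩
    simpa [ZMod.val_lt] using he.2

theorem infinite_setOf_mem [NeZero N] (hv : v ∈ (f i : Sym2 V)) :
    {t : ℕ | v ∈ (f (i + t) : Sym2 V)}.Infinite :=
  Set.infinite_of_injective_forall_mem (mul_right_injective₀ (NeZero.ne N)) fun k => by simpa

theorem mem_occurrence [NeZero N] (hv : v ∈ (f i : Sym2 V)) (k : ℕ) :
    v ∈ (f (i + occurrence f i v k) : Sym2 V) :=
  Nat.nth_mem_of_infinite (infinite_setOf_mem hv) k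

theorem occurrence_strictMono [NeZero N] (hv : v ∈ (f i : Sym2 V)) :
    StrictMono (occurrence f i v) :=
  Nat.nth_strictMono (infinite_setOf_mem hv)

theorem occurrence_zero (hv : v ∈ (f i : Sym2 V)) : occurrence f i v 0 = 0 :=
  Nat.nth_zero_of_zero (by simpa using hv)

theorem occurrence_degree [Fintype V] [DecidableRel G.Adj] [NeZero N]
    (hv : v ∈ (f i : Sym2 V)) : occurrence f i v (G.degree v) = N := by
  classical
  rw [← count_mem_eq_degree f i v]
  exact Nat.nth_count (by simpa using hv)

theorem le_occurrence_of_lt_succ {k t : ℕ} (hlt : t < occurrence f i v (k + 1))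
    (ht : v ∈ (f (i + t) : Sym2 V)) : t ≤ occurrence f i v k :=
  Nat.le_nth_of_lt_nth_succ hlt ht

theorem occurrence_succ_le {k t : ℕ} (hlt : occurrence f i v k < t)
    (ht : v ∈ (f (i + t) : Sym2 V)) : occurrence f i v (k + 1) ≤ t :=
  not_lt.1 fun h => (le_occurrence_of_lt_succ h ht).not_gt hlt

theorem occurrence_ne_occurrence [Fintype V] [DecidableRel G.Adj] [NeZero N]
    (hreg : G.IsRegularOfDegree d) {a b : V} (hab : a ≠ b) (ha : a ∈ (f i : Sym2 V))
    (hb : b ∈ (f i : Sym2 V)) {k : ℕ} (hk : 0 < k) (hkd : k < d) :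
    occurrence f i a k ≠ occurrence f i b k := by
  intro heq
  have hidx : i = i + occurrence f i a k :=
    index_eq_of_mem_of_mem hab ha hb (mem_occurrence ha k) (heq ▸ mem_occurrence hb k)
  have hpos : 0 < occurrence f i a k := by
    simpa only [occurrence_zero ha] using occurrence_strictMono ha hk
  have hlt : occurrence f i a k < N := by
    simpa only [← hreg a, occurrence_degree ha] using
      occurrence_strictMono ha (hkd.trans_eq (hreg a).symm)
  exact hlt.not_ge
    (Nat.le_of_dvd hpos ((ZMod.natCast_eq_zero_iff _ _).1 (left_eq_add.1 hidx)))

namespace CyclicGood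

theorem occurrence_add_le_occurrence_succ [NeZero N] (hf : CyclicGood G f m)
    (hv : v ∈ (f i : Sym2 V)) (k : ℕ) : occurrence f i v k + m ≤ occurrence f i v (k + 1) := by
  by_contra! hlt
  have hinc := occurrence_strictMono hv (Nat.lt_add_one k)
  have hdisj := cyclicGood_iff_forall_add.1 hf (i + occurrence f i v k)
    (occurrence f i v (k + 1) - occurrence f i v k) (by omega) (by omega) v (mem_occurrence hv k)
  rw [add_assoc, ← Nat.cast_add, Nat.add_sub_cancel' hinc.le] at hdisj
  exact hdisj (mem_occurrence hv (k + 1))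

theorem le_occurrence_one [NeZero N] (hf : CyclicGood G f m) (hv : v ∈ (f i : Sym2 V)) :
    m ≤ occurrence f i v 1 := by
  simpa [occurrence_zero hv] using hf.occurrence_add_le_occurrence_succ hv 0

theorem occurrence_one_eq_iff [NeZero N] (hf : CyclicGood G f m) (hm : m ≠ 0)
    (hv : v ∈ (f i : Sym2 V)) : occurrence f i v 1 = m ↔ v ∈ (f (i + m) : Sym2 V) :=
  ⟨fun h => h ▸ mem_occurrence hv 1, fun h => (occurrence_succ_le
    ((occurrence_zero hv).trans_lt (Nat.pos_of_ne_zero hm)) h).antisymm (hf.le_occurrence_one hv)⟩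

variable [Fintype V] [NeZero N]

theorem occurrence_succ_le_occurrence_add (hf : CyclicGood G f m)
    (hV : Fintype.card V = 2 * m + 1) (hm : (m : ZMod N) ≠ 0) (hv : v ∈ (f i : Sym2 V)) (k : ℕ) :
    occurrence f i v (k + 1) ≤ occurrence f i v k + m + 1 := by
  have hm0 : m ≠ 0 := by rintro rfl; simp at hm
  rcases hf.mem_add_or_mem_add_succ hV hm (mem_occurrence hv k) with h | h <;>
    rw [add_assoc, ← Nat.cast_add] at h
  · exact (occurrence_succ_le (by omega) h).trans (Nat.le_succ _)
  · exact occurrence_succ_le (by omega) h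

variable [DecidableRel G.Adj]

theorem occurrence_lt_occurrence (hf : CyclicGood G f m) (hV : Fintype.card V = 2 * m + 1)
    (hm : (m : ZMod N) ≠ 0) (hreg : G.IsRegularOfDegree d) {a b : V} (hab : a ≠ b)
    (ha : a ∈ (f i : Sym2 V)) (hb : b ∈ (f i : Sym2 V))
    (hlt : occurrence f i a 1 < occurrence f i b 1) {k : ℕ} (hk : 1 ≤ k) (hkd : k < d) :
    occurrence f i a k < occurrence f i b k := by
  induction k, hk using Nat.le_induction with
  | base => exact hlt
  | succ k _ ih =>
    have hprev := ih (by omega)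
    have hstep_a := hf.occurrence_succ_le_occurrence_add hV hm ha k
    have hstep_b := hf.occurrence_add_le_occurrence_succ hb k
    exact lt_of_le_of_ne (by omega) (occurrence_ne_occurrence hreg hab ha hb k.succ_pos hkd)

theorem notMem_add_of_mem_sub (hf : CyclicGood G f m) (hV : Fintype.card V = 2 * m + 1)
    (hm : (m : ZMod N) ≠ 0) (hreg : G.IsRegularOfDegree d) {i : ZMod N} {a : V}
    (hprev : a ∈ (f (i - m) : Sym2 V)) (ha : a ∈ (f i : Sym2 V)) :
    a ∉ (f (i + m) : Sym2 V) := by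
  intro hnext
  have hm0 : m ≠ 0 := by rintro rfl; simp at hm
  obtain ⟨x, hxa, hx⟩ := exists_ne_mem_edge ha
  have hx_next : x ∉ (f (i + m) : Sym2 V) := fun h =>
    hm (left_eq_add.1 (index_eq_of_mem_of_mem hxa hx ha h hnext))
  have ha_one : occurrence f i a 1 = m := (hf.occurrence_one_eq_iff hm0 ha).2 hnext
  have hx_one : m < occurrence f i x 1 := (hf.le_occurrence_one hx).lt_of_ne' fun h =>
    hx_next ((hf.occurrence_one_eq_iff hm0 hx).1 h)
  have ha_last : occurrence f i a d = N := hreg a ▸ occurrence_degree ha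
  have hx_last : occurrence f i x d = N := hreg x ▸ occurrence_degree hx
  obtain ⟨l, rfl⟩ : ∃ l, d = l + 2 := by
    rcases d with _ | _ | l
    · exact absurd (ha_last.symm.trans (occurrence_zero ha)) (NeZero.ne N)
    · exact absurd (by rw [← ha_one, ha_last, ZMod.natCast_self]) hm
    · exact ⟨l, rfl⟩
  have hmN : m < N :=
    ha_one.symm.trans_lt ((occurrence_strictMono ha (by omega : 1 < l + 2)).trans_eq ha_last)
  have ha_penultimate : N - m ≤ occurrence f i a (l + 1) := by
    refine le_occurrence_of_lt_succ (ha_last.symm ▸ by omega) ?_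
    rwa [Nat.cast_sub hmN.le, ZMod.natCast_self, zero_sub, ← sub_eq_add_neg]
  have hx_penultimate : occurrence f i x (l + 1) + m ≤ N :=
    (hf.occurrence_add_le_occurrence_succ hx (l + 1)).trans_eq hx_last
  have hlt : occurrence f i a (l + 1) < occurrence f i x (l + 1) :=
    hf.occurrence_lt_occurrence hV hm hreg hxa.symm ha hx (ha_one.trans_lt hx_one)
      (Nat.le_add_left 1 l) (Nat.lt_succ_self _)
  omega

theorem mem_add_of_notMem_sub (hf : CyclicGood G f m) (hV : Fintype.card V = 2 * m + 1)
    (hm : (m : ZMod N) ≠ 0) (hreg : G.IsRegularOfDegree d) {i : ZMod N} {a : V}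
    (ha : a ∈ (f i : Sym2 V)) (hprev : a ∉ (f (i - m) : Sym2 V)) : a ∈ (f (i + m) : Sym2 V) := by
  obtain ⟨c, hc_prev, hc⟩ := hf.exists_mem_mem_add hV hm (i - m)
  rw [sub_add_cancel] at hc
  obtain ⟨b, hb, hb_next⟩ := hf.exists_mem_mem_add hV hm i
  have hca : c ≠ a := by rintro rfl; exact hprev hc_prev
  have hcb : c ≠ b := by rintro rfl; exact hf.notMem_add_of_mem_sub hV hm hreg hc_prev hc hb_next
  have hba : b = a := by
    rw [(Sym2.mem_and_mem_iff hca).1 ⟨hc, ha⟩, Sym2.mem_iff] at hb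
    exact hb.resolve_left hcb.symm
  exact hba ▸ hb_next

theorem length_dvd_two_mul_add_one (hf : CyclicGood G f m) (hV : Fintype.card V = 2 * m + 1)
    (hm : (m : ZMod N) ≠ 0) (hm2 : 2 ≤ m) (hreg : G.IsRegularOfDegree d) :
    N ∣ 2 * m + 1 := by
  obtain ⟨x, hx, hx_short⟩ := hf.exists_mem_mem_add hV hm 0
  obtain ⟨a, hax, ha⟩ := exists_ne_mem_edge hx
  have ha_notMem : a ∉ (f (0 + m) : Sym2 V) := fun h =>
    hm (left_eq_add.1 (index_eq_of_mem_of_mem hax ha hx h hx_short))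
  have ha_long : a ∈ (f (0 + (m + 1 : ℕ)) : Sym2 V) :=
    (hf.mem_add_or_mem_add_succ hV hm ha).resolve_left ha_notMem
  have ha_long_short : a ∈ (f (0 + (m + 1 : ℕ) + m) : Sym2 V) := by
    refine hf.mem_add_of_notMem_sub hV hm hreg ha_long ?_
    rw [Nat.cast_add, ← add_sub, add_sub_cancel_left]
    exact cyclicGood_iff_forall_add.1 hf 0 1 one_pos hm2 a ha
  have hx_short_long : x ∈ (f (0 + m + (m + 1 : ℕ)) : Sym2 V) :=
    (hf.mem_add_or_mem_add_succ hV hm hx_short).resolve_left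
      (hf.notMem_add_of_mem_sub hV hm hreg (by rwa [add_sub_cancel_right]) hx_short)
  rw [add_right_comm] at ha_long_short
  have hindex := index_eq_of_mem_of_mem hax ha hx ha_long_short hx_short_long
  rw [add_assoc, ← Nat.cast_add, left_eq_add, ZMod.natCast_eq_zero_iff] at hindex
  rwa [two_mul, add_assoc]

end CyclicGood

end Occurrences

theorem cms_lt_of_isRegularOfDegree {V : Type*} [Fintype V] {G : SimpleGraph V}
    [DecidableRel G.Adj] {m d : ℕ} (hV : Fintype.card V = 2 * m + 1)
    (hreg : G.IsRegularOfDegree d) (hd : 3 ≤ d) : cms G < m := by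
  have hm : 2 ≤ m := by
    obtain ⟨v⟩ : Nonempty V := Fintype.card_pos_iff.1 (by omega)
    have hdegree := G.degree_lt_card_verts v
    rw [hreg v, hV] at hdegree
    omega
  have hedges : 2 * m + 1 < edgeCount G := by
    have htwice := two_mul_edgeCount_of_isRegularOfDegree hreg
    rw [hV] at htwice
    nlinarith
  have : NeZero (edgeCount G) := ⟨by omega⟩
  have hm_cast : (m : ZMod (edgeCount G)) ≠ 0 := by
    rw [Ne, ZMod.natCast_eq_zero_iff]
    exact Nat.not_dvd_of_pos_of_lt (by omega) (by omega)
  refine Nat.lt_of_le_sub_one (by omega) (csSup_le' fun d' ⟨f, hf⟩ => ?_)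
  by_contra! hlt
  have hdvd := (hf.mono (by omega)).length_dvd_two_mul_add_one hV hm_cast hm hreg
  exact Nat.not_dvd_of_pos_of_lt (Nat.succ_pos _) hedges hdvd

section Zigzag

variable {m : ℕ}

/-- The edge `{t + r, t - r}` of the complete graph on `ZMod (2 * m + 1)`. For fixed `t`, the chords
with `1 ≤ r ≤ m` form the near-perfect matching that misses `t`. -/
def chord (t : ZMod (2 * m + 1)) (r : ℕ) : Sym2 (ZMod (2 * m + 1)) :=
  s(t + r, t - r)

/-- The chords `{t + 1, t - 1}, …, {t + m, t - m}` for `t = 0`, then those for `t = 1`, and so on: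
position `n` holds the one with `t = n / m` and `r = n % m + 1`. -/
def chordSeq (m n : ℕ) : Sym2 (ZMod (2 * m + 1)) :=
  chord ((n / m : ℕ) : ZMod (2 * m + 1)) (n % m + 1)

theorem eq_of_intCast_eq_of_abs_sub_lt {n : ℕ} {a b : ℤ} (h : (a : ZMod n) = b)
    (hlt : |b - a| < n) : a = b :=
  (sub_eq_zero.1 (Int.eq_zero_of_abs_lt_dvd
    ((ZMod.intCast_eq_intCast_iff_dvd_sub a b n).1 h) hlt)).symm

theorem mem_chord_iff {t v : ZMod (2 * m + 1)} {r : ℕ} :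
    v ∈ chord t r ↔ ∃ z : ℤ, |z| = r ∧ v = t + z := by
  simp only [chord, Sym2.mem_iff, abs_eq (Int.natCast_nonneg r)]
  constructor
  · rintro (rfl | rfl)
    · exact ⟨r, .inl rfl, by simp⟩
    · exact ⟨-r, .inr rfl, by simp [sub_eq_add_neg]⟩
  · rintro ⟨z, rfl | rfl, rfl⟩
    · simp
    · simp [sub_eq_add_neg]

theorem edgesDisjoint_chord_chord {t : ZMod (2 * m + 1)} {r s : ℕ} (hr : r ≤ m) (hs : s ≤ m)
    (hrs : r ≠ s) : edgesDisjoint (chord t r) (chord t s) := by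
  intro v hvr hvs
  obtain ⟨z, hz, rfl⟩ := mem_chord_iff.1 hvr
  obtain ⟨w, hw, hzw⟩ := mem_chord_iff.1 hvs
  have := eq_of_intCast_eq_of_abs_sub_lt (add_left_cancel hzw) (by grind)
  grind

theorem edgesDisjoint_chord_chord_add_one {t : ZMod (2 * m + 1)} {r s : ℕ} (hr : r ≤ m)
    (hsr : s + 2 ≤ r) : edgesDisjoint (chord t r) (chord (t + 1) s) := by
  intro v hvr hvs
  obtain ⟨z, hz, rfl⟩ := mem_chord_iff.1 hvr
  obtain ⟨w, hw, hzw⟩ := mem_chord_iff.1 hvs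
  have hcast : (z : ZMod (2 * m + 1)) = (1 + w : ℤ) := by
    rw [add_assoc] at hzw
    exact_mod_cast add_left_cancel hzw
  have := eq_of_intCast_eq_of_abs_sub_lt hcast (by grind)
  grind

theorem chord_mem_edgeSet (t : ZMod (2 * m + 1)) {r : ℕ} (hr : 0 < r) (hrm : r ≤ m) :
    chord t r ∈ (⊤ : SimpleGraph (ZMod (2 * m + 1))).edgeSet := by
  rw [chord, SimpleGraph.mem_edgeSet, SimpleGraph.top_adj]
  intro h
  have hcast : ((r : ℤ) : ZMod (2 * m + 1)) = (-r : ℤ) := by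
    simpa [sub_eq_add_neg] using h
  have := eq_of_intCast_eq_of_abs_sub_lt hcast (by grind)
  omega

-- The endpoints of `chord t r` add up to `2 * t`, and `2` has the inverse `m + 1`.
theorem center_eq_of_chord_eq {t u : ZMod (2 * m + 1)} {r s : ℕ} (h : chord t r = chord u s) :
    t = u := by
  have hzero : (2 * m + 1 : ZMod (2 * m + 1)) = 0 := by
    exact_mod_cast ZMod.natCast_self (2 * m + 1)
  have htwo : 2 * t = 2 * u := by
    rcases Sym2.eq_iff.1 h with ⟨hadd, hsub⟩ | ⟨hadd, hsub⟩ <;> linear_combination hadd + hsub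
  linear_combination (m + 1 : ZMod (2 * m + 1)) * htwo - (t - u) * hzero

theorem chord_injOn (t : ZMod (2 * m + 1)) : Set.InjOn (chord t) (Set.Iic m) := by
  intro r hr s hs h
  by_contra hrs
  have hdisj := edgesDisjoint_chord_chord (t := t) hr hs hrs
  exact hdisj (t + r) (Sym2.mem_mk_left _ _) (h ▸ Sym2.mem_mk_left _ _)

theorem chordSeq_mem_edgeSet (hm : 0 < m) (n : ℕ) :
    chordSeq m n ∈ (⊤ : SimpleGraph (ZMod (2 * m + 1))).edgeSet :=
  chord_mem_edgeSet _ (Nat.succ_pos _) (Nat.mod_lt n hm)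

theorem chordSeq_periodic (hm : 0 < m) : Function.Periodic (chordSeq m) (m * (2 * m + 1)) := by
  intro n
  rw [chordSeq, chordSeq, Nat.add_mul_mod_self_left, Nat.add_mul_div_left _ _ hm, Nat.cast_add,
    ZMod.natCast_self, add_zero]

theorem chordSeq_injOn (hm : 0 < m) : Set.InjOn (chordSeq m) (Set.Iio (m * (2 * m + 1))) := by
  intro n hn k hk h
  have hdiv_cast := center_eq_of_chord_eq h
  have hdiv : n / m = k / m := ((ZMod.natCast_eq_natCast_iff _ _ _).1 hdiv_cast).eq_of_lt_of_lt
    (Nat.div_lt_of_lt_mul hn) (Nat.div_lt_of_lt_mul hk)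
  rw [chordSeq, chordSeq, hdiv_cast] at h
  have hmod : n % m = k % m :=
    Nat.succ_injective (chord_injOn _ (Nat.mod_lt n hm) (Nat.mod_lt k hm) h)
  rw [← Nat.div_add_mod n m, ← Nat.div_add_mod k m, hdiv, hmod]

theorem edgesDisjoint_chordSeq_add (n : ℕ) {k : ℕ} (hk : 0 < k) (hkm : k < m - 1) :
    edgesDisjoint (chordSeq m n) (chordSeq m (n + k)) := by
  have hm : 0 < m := by omega
  have hn := Nat.mod_lt n hm
  have hdiv := Nat.add_div (a := n) (b := k) hm
  have hmod := Nat.add_mod_add_ite n k m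
  rw [Nat.mod_eq_of_lt (by omega : k < m)] at hdiv hmod
  rw [Nat.div_eq_of_lt (by omega : k < m), add_zero] at hdiv
  rw [chordSeq, chordSeq, hdiv]
  split_ifs at hmod ⊢
  · rw [Nat.cast_add, Nat.cast_one]
    exact edgesDisjoint_chord_chord_add_one (by omega) (by omega)
  · exact edgesDisjoint_chord_chord (by omega) (by omega) (by omega)

end Zigzag

theorem edgeCount_completeGraph_odd {V : Type*} [Fintype V] {m : ℕ}
    (hV : Fintype.card V = 2 * m + 1) : edgeCount (⊤ : SimpleGraph V) = m * (2 * m + 1) := by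
  classical
  have htwice := two_mul_edgeCount_of_isRegularOfDegree
    (SimpleGraph.IsRegularOfDegree.top (V := V))
  rw [hV, Nat.add_sub_cancel] at htwice
  linarith

theorem sub_one_le_cms_completeGraph_zmod {m : ℕ} (hm : 0 < m) :
    m - 1 ≤ cms (⊤ : SimpleGraph (ZMod (2 * m + 1))) := by
  have hN := edgeCount_completeGraph_odd (ZMod.card (2 * m + 1))
  refine le_cms_of_periodic (e := chordSeq m) (by rw [hN]; positivity) (chordSeq_mem_edgeSet hm)
    ?_ ?_ fun n _ => edgesDisjoint_chordSeq_add n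
  · exact hN ▸ chordSeq_periodic hm
  · exact hN ▸ chordSeq_injOn hm

/-- For every integer `m ≥ 2`, `cms (K_{2m+1}) = m - 1`. -/
theorem cms_completeGraph_odd (m : ℕ) (hm : 2 ≤ m) :
    cms (⊤ : SimpleGraph (Fin (2 * m + 1))) = m - 1 := by
  have upper : cms (⊤ : SimpleGraph (Fin (2 * m + 1))) < m :=
    cms_lt_of_isRegularOfDegree (Fintype.card_fin _) SimpleGraph.IsRegularOfDegree.top
      (by rw [Fintype.card_fin]; omega)
  -- `ZMod (2 * m + 1)` unfolds to `Fin (2 * m + 1)`.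
  have lower : m - 1 ≤ cms (⊤ : SimpleGraph (Fin (2 * m + 1))) :=
    sub_one_le_cms_completeGraph_zmod (by omega)
  omega
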